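/- arXiv:1603.01078 — 2 statements merged into one kernel-verified Lean document; each statement's English description precedes it below -/
import Mathlib

section
/- Let S be a numerical semigroup minimally generated by n_1 < … < n_d, let k be a field and let 1 ≤ i ≤ d. The following are equivalent: (1) AP(S,n_i) is homogeneous; (2) there exists a minimal generating set E of the toric ideal I_S consisting of binomials such that the variable x_i belongs to the support of every non-homogeneous element of E. -/
open scoped BigOperators

/-- The value `Σ aᵢ nᵢ` of a tuple of coefficients `a` w.r.t. the generators `n`. -/
def sval {d : ℕ} (n : Fin d → ℕ) (a : Fin d → ℕ) : ℕ := ∑ i, a i * n i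

/-- The total length `Σ aᵢ` of a factorization. -/
def tlen {d : ℕ} (a : Fin d → ℕ) : ℕ := ∑ i, a i

/-- The submonoid of `ℕ` generated by `n`. -/
def gen {d : ℕ} (n : Fin d → ℕ) : Set ℕ := {s : ℕ | ∃ a : Fin d → ℕ, s = sval n a}

/-- The Apéry set of the semigroup generated by `n` with respect to `s`:
elements `x` of the semigroup such that `x - s` is not in the semigroup. -/
def Apery {d : ℕ} (n : Fin d → ℕ) (s : ℕ) : Set ℕ :=
  {x : ℕ | x ∈ gen n ∧ ¬ ∃ y ∈ gen n, x = s + y}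

/-- A subset `T` is homogeneous if every nonzero element of `T` has all its
factorizations of the same length. -/
def HomogSet {d : ℕ} (n : Fin d → ℕ) (T : Set ℕ) : Prop :=
  ∀ t ∈ T, t ≠ 0 → ∀ a b : Fin d → ℕ, sval n a = t → sval n b = t → tlen a = tlen b

/-- The order of `s`: the maximal length of a factorization of `s`. -/
noncomputable def ordS {d : ℕ} (n : Fin d → ℕ) (s : ℕ) : ℕ :=
  sSup {l : ℕ | ∃ a : Fin d → ℕ, sval n a = s ∧ tlen a = l}

/-- The torsion set of the semigroup generated by `n`, with respect to the
generator of index `i0` (the smallest generator). -/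
noncomputable def Torsion {d : ℕ} (n : Fin d → ℕ) (i0 : Fin d) : Set ℕ :=
  {s : ℕ | s ∈ gen n ∧ ∃ c : ℕ, 0 < c ∧ ordS n s + c < ordS n (s + c * n i0)}

/-- `n` is a minimal system of generators: any expression of a generator as a
nonnegative combination of the generators has total coefficient sum one. -/
def MinGen {d : ℕ} (n : Fin d → ℕ) : Prop :=
  ∀ r : Fin d, ∀ a : Fin d → ℕ, n r = sval n a → tlen a = 1

/-- `n` generates a numerical semigroup (cofinite in `ℕ`). -/
def IsNumerical {d : ℕ} (n : Fin d → ℕ) : Prop := {x : ℕ | x ∉ gen n}.Finite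

/-- The monomial `x^a = Π xᵢ^{aᵢ}`. -/
noncomputable def monom (k : Type*) [CommRing k] {d : ℕ} (a : Fin d → ℕ) :
    MvPolynomial (Fin d) k :=
  ∏ i, (MvPolynomial.X i : MvPolynomial (Fin d) k) ^ a i

/-- The toric ideal `I_S`: kernel of `k[x₁,…,x_d] → k[t]`, `xᵢ ↦ t^{nᵢ}`. -/
noncomputable def toricIdeal (k : Type*) [CommRing k] {d : ℕ} (n : Fin d → ℕ) :
    Ideal (MvPolynomial (Fin d) k) :=
  RingHom.ker (MvPolynomial.aeval (R := k)
    (fun i => (Polynomial.X : Polynomial k) ^ n i)).toRingHom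

/-- `E` is a minimal generating set of the ideal `I`: it spans `I` and no
proper subset spans `I`. -/
def IsMinGenSet {R : Type*} [CommRing R] (I : Ideal R) (E : Set R) : Prop :=
  Ideal.span E = I ∧ ∀ E' : Set R, E' ⊂ E → Ideal.span E' ≠ I

/-- Membership of an integer in the semigroup generated by `n`. -/
def memZ {d : ℕ} (n : Fin d → ℕ) (z : ℤ) : Prop := ∃ x ∈ gen n, (x : ℤ) = z

/-- A numerical semigroup with Frobenius number `F = max (ℤ ∖ S)` is symmetric
if for every integer `z`, `z ∈ S ↔ F - z ∉ S`. -/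
def IsSymmetric {d : ℕ} (n : Fin d → ℕ) : Prop :=
  ∃ F : ℤ, ¬ memZ n F ∧ (∀ z : ℤ, F < z → memZ n z) ∧
    ∀ z : ℤ, memZ n z ↔ ¬ memZ n (F - z)

/-- A numerical semigroup with Frobenius number `F = max (ℤ ∖ S)` is
pseudo-symmetric if `F` is even and for every integer `z`,
`z ∈ S ↔ (z ≠ F/2 ∧ F - z ∉ S)`. -/
def IsPseudoSymmetric {d : ℕ} (n : Fin d → ℕ) : Prop :=
  ∃ F : ℤ, ¬ memZ n F ∧ (∀ z : ℤ, F < z → memZ n z) ∧ F % 2 = 0 ∧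
    ∀ z : ℤ, memZ n z ↔ (z ≠ F / 2 ∧ ¬ memZ n (F - z))

/-- The generators `q·m₁,…,q·m_d, p·n₁,…,p·n_e` of the gluing of two numerical
semigroups. -/
def glueGen {d e : ℕ} (mg : Fin d → ℕ) (ng : Fin e → ℕ) (p q : ℕ) :
    Fin (d + e) → ℕ :=
  Fin.append (fun i => q * mg i) (fun i => p * ng i)
theorem monom_eq (k : Type*) [CommRing k] {d : ℕ} (a : Fin d → ℕ) :
    monom k a = MvPolynomial.monomial (Finsupp.equivFunOnFinite.symm a) (1 : k) := by
  rw [MvPolynomial.monomial_eq, monom, Finsupp.prod_fintype]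
  · simp
  · simp

theorem sval_add {d : ℕ} (n a b : Fin d → ℕ) : sval n (a + b) = sval n a + sval n b := by
  simp [sval, add_mul, Finset.sum_add_distrib]

theorem tlen_add {d : ℕ} (a b : Fin d → ℕ) : tlen (a + b) = tlen a + tlen b := by
  simp [tlen, Finset.sum_add_distrib]

theorem sval_single {d : ℕ} (n : Fin d → ℕ) (i : Fin d) : sval n (Pi.single i 1) = n i := by
  simp [sval, Pi.single_apply]

theorem aeval_monom (k : Type*) [Field k] {d : ℕ} (n a : Fin d → ℕ) :
    MvPolynomial.aeval (R := k) (fun i => (Polynomial.X : Polynomial k) ^ n i) (monom k a)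
      = Polynomial.X ^ sval n a := by
  simp [monom, sval, ← pow_mul, Finset.prod_pow_eq_pow_sum, mul_comm]

theorem mem_toric (k : Type*) [Field k] {d : ℕ} (n : Fin d → ℕ) (p : MvPolynomial (Fin d) k) :
    p ∈ toricIdeal k n ↔
      MvPolynomial.aeval (R := k) (fun i => (Polynomial.X : Polynomial k) ^ n i) p = 0 := by
  rfl

theorem binom_mem (k : Type*) [Field k] {d : ℕ} (n a b : Fin d → ℕ) :
    monom k a - monom k b ∈ toricIdeal k n ↔ sval n a = sval n b := by
  rw [mem_toric, map_sub, aeval_monom, aeval_monom, sub_eq_zero]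
  constructor
  · intro h
    have := congrArg Polynomial.natDegree h
    simpa using this
  · intro h
    rw [h]

/-- The toric ideal is contained in any ideal containing all its binomials. -/
theorem toric_le (k : Type*) [Field k] {d : ℕ} (n : Fin d → ℕ)
    (J : Ideal (MvPolynomial (Fin d) k))
    (hJ : ∀ a b : Fin d → ℕ, sval n a = sval n b → monom k a - monom k b ∈ J) :
    toricIdeal k n ≤ J := by
  classical
  let r : ℕ → (Fin d → ℕ) := fun s => if h : ∃ a, sval n a = s then h.choose else 0
  have hr : ∀ a, sval n (r (sval n a)) = sval n a := by
    intro a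
    have h : ∃ b, sval n b = sval n a := ⟨a, rfl⟩
    simp only [r, dif_pos h]
    exact h.choose_spec
  let ψ : Polynomial k →ₗ[k] MvPolynomial (Fin d) k :=
    (Polynomial.basisMonomials k).constr k (fun s => monom k (r s))
  have hψ : ∀ s, ψ (Polynomial.X ^ s) = monom k (r s) := by
    intro s
    have := (Polynomial.basisMonomials k).constr_basis k (fun s => monom k (r s)) s
    simpa [ψ, Polynomial.monomial_one_right_eq_X_pow] using this
  have key : ∀ p : MvPolynomial (Fin d) k,
      ψ (MvPolynomial.aeval (R := k) (fun i => (Polynomial.X : Polynomial k) ^ n i) p) - p ∈ J := by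
    intro p
    induction p using MvPolynomial.induction_on' with
    | monomial u c =>
      have h1 : MvPolynomial.monomial u c = c • monom k (⇑u) := by
        rw [monom_eq]; simp [MvPolynomial.smul_monomial]
      rw [h1, map_smul, map_smul, aeval_monom, hψ, ← smul_sub, MvPolynomial.smul_eq_C_mul]
      exact J.mul_mem_left _ (hJ _ _ (hr _))
    | add p q hp hq =>
      rw [map_add, map_add, add_sub_add_comm]
      exact J.add_mem hp hq
  intro p hp
  have := key p
  rw [(mem_toric k n p).1 hp, map_zero, zero_sub] at this
  exact (neg_mem_iff).1 this

theorem homog_of_span (k : Type*) [Field k] {d : ℕ} (n : Fin d → ℕ) (i : Fin d)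
    (E : Set (MvPolynomial (Fin d) k)) (hE : Ideal.span E = toricIdeal k n)
    (hb : ∀ f ∈ E, ∃ a b : Fin d → ℕ, f = monom k a - monom k b)
    (hs : ∀ a b : Fin d → ℕ, monom k a - monom k b ∈ E → tlen a ≠ tlen b → a i + b i ≠ 0) :
    HomogSet n (Apery n (n i)) := by
  classical
  rintro t ⟨-, ht⟩ - a b ha hb'
  have hz : ∀ c : Fin d → ℕ, sval n c = t → c i = 0 := by
    intro c hc
    by_contra h
    refine ht ⟨sval n (c - Pi.single i 1), ⟨_, rfl⟩, ?_⟩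
    rw [← hc, ← sval_single n i, ← sval_add]
    congr 1
    ext j
    by_cases hj : j = i
    · subst hj; simp; omega
    · simp [hj]
  let g : (Fin d → ℕ) → k := fun c => if sval n c = t ∧ tlen c = tlen a then 1 else 0
  let φ : MvPolynomial (Fin d) k →ₗ[k] k :=
    (MvPolynomial.basisMonomials (Fin d) k).constr k (fun c => g ⇑c)
  have hφ : ∀ c : Fin d → ℕ, φ (monom k c) = g c := by
    intro c
    have := (MvPolynomial.basisMonomials (Fin d) k).constr_basis k (fun c => g ⇑c)
      (Finsupp.equivFunOnFinite.symm c)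
    simpa [φ, monom_eq] using this
  have hm : ∀ a b : Fin d → ℕ, monom k a * monom k b = monom k (a + b) := by
    intro a b
    simp [monom, pow_add, Finset.prod_mul_distrib]
  have key : ∀ p ∈ Ideal.span E, ∀ q, φ (q * p) = 0 := by
    intro p hp
    induction hp using Submodule.span_induction with
    | mem e he =>
      obtain ⟨u, v, rfl⟩ := hb e he
      have huv : sval n u = sval n v := by
        rw [← binom_mem k, ← hE]
        exact Ideal.subset_span he
      intro q
      induction q using MvPolynomial.induction_on' with
      | monomial w c =>
        have h1 : MvPolynomial.monomial w c = c • monom k (⇑w) := by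
          rw [monom_eq]; simp [MvPolynomial.smul_monomial]
        rw [h1, smul_mul_assoc, map_smul, mul_sub, map_sub, hm, hm, hφ, hφ]
        have h2 : g (w + u) = g (w + v) := by
          simp only [g, sval_add, tlen_add, huv]
          by_cases h : sval n w + sval n v = t
          · have h3 := hz (w + u) (by rw [sval_add, huv, h])
            have h4 := hz (w + v) (by rw [sval_add, h])
            simp only [Pi.add_apply] at h3 h4
            have h5 : tlen u = tlen v := by
              by_contra h6
              exact hs u v he h6 (by omega)
            rw [h5]
          · simp [h]
        rw [h2]; simp
      | add p q hp hq => rw [add_mul, map_add, hp, hq, add_zero]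
    | zero => simp
    | add x y _ _ hx hy => intro q; rw [mul_add, map_add, hx, hy, add_zero]
    | smul r x _ hx => intro q; rw [smul_eq_mul, ← mul_assoc]; exact hx _
  have h := key (monom k a - monom k b)
    (by rw [hE, binom_mem, ha, hb']) 1
  rw [one_mul, map_sub, hφ, hφ] at h
  by_contra hne
  simp [g, ha, Ne.symm hne] at h

theorem monom_sub_inj (k : Type*) [Field k] {d : ℕ} (a b a' b' : Fin d → ℕ) (hab : a ≠ b)
    (h : monom k a - monom k b = monom k a' - monom k b') :
    (a = a' ∧ b = b') ∨ (a = b' ∧ b = a') := by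
  classical
  have h1 := congrArg (MvPolynomial.coeff (Finsupp.equivFunOnFinite.symm a)) h
  have h2 := congrArg (MvPolynomial.coeff (Finsupp.equivFunOnFinite.symm b)) h
  simp only [monom_eq, MvPolynomial.coeff_sub, MvPolynomial.coeff_monomial,
    EmbeddingLike.apply_eq_iff_eq] at h1 h2
  have e1 : a' = a ∨ b' = a := by
    by_contra! hc
    simp [hc.1, hc.2, Ne.symm hab] at h1
  have e2 : a' = b ∨ b' = b := by
    by_contra! hc
    simp [hc.1, hc.2, hab] at h2
  rcases e1 with e1 | e1 <;> rcases e2 with e2 | e2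
  · exact absurd (e1.symm.trans e2) hab
  · exact Or.inl ⟨e1.symm, e2.symm⟩
  · exact Or.inr ⟨e1.symm, e2.symm⟩
  · exact absurd (e1.symm.trans e2) hab

theorem exists_minGen {R : Type*} [CommRing R] [IsNoetherianRing R] (B : Set R) :
    ∃ E ⊆ B, IsMinGenSet (Ideal.span B) E := by
  classical
  obtain ⟨F, hF, hFs⟩ := (Submodule.fg_span_iff_fg_span_finset_subset (R := R) B).1
    (IsNoetherian.noetherian (Ideal.span B))
  have hex : ∃ m : ℕ, ∃ F : Finset R, (F : Set R) ⊆ B ∧ Ideal.span (F : Set R) = Ideal.span B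
      ∧ F.card = m := ⟨_, F, hF, hFs.symm, rfl⟩
  obtain ⟨G, hG, hGs, hc⟩ := Nat.find_spec hex
  refine ⟨G, hG, hGs, ?_⟩
  intro E' hE' hsp
  have hfin : E'.Finite := G.finite_toSet.subset hE'.1
  have hlt : hfin.toFinset.card < G.card := by
    apply Finset.card_lt_card
    rw [← Finset.coe_ssubset]
    simpa using hE'
  rw [hc] at hlt
  exact Nat.find_min hex hlt ⟨hfin.toFinset, by simpa using hE'.1.trans hG, by simpa using hsp, rfl⟩

/-- `AP(S,nᵢ)` is homogeneous iff there is a minimal binomial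
generating set of `I_S` such that `xᵢ` is in the support of every
non-homogeneous element. -/
theorem statement3 {d : ℕ} (hd : 0 < d) (k : Type*) [Field k]
    (n : Fin d → ℕ) (hmono : StrictMono n) (hpos : 0 < n ⟨0, hd⟩)
    (hnum : IsNumerical n) (hmin : MinGen n) (i : Fin d) :
    HomogSet n (Apery n (n i)) ↔
      ∃ E : Set (MvPolynomial (Fin d) k),
        IsMinGenSet (toricIdeal k n) E ∧
        (∀ f ∈ E, ∃ a b : Fin d → ℕ, f = monom k a - monom k b) ∧
        (∀ a b : Fin d → ℕ, monom k a - monom k b ∈ E → tlen a ≠ tlen b →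
          a i + b i ≠ 0) := by
  constructor
  · intro H
    let B : Set (MvPolynomial (Fin d) k) := {f | ∃ a b : Fin d → ℕ, f = monom k a - monom k b ∧
      sval n a = sval n b ∧ (tlen a ≠ tlen b → a i + b i ≠ 0)}
    have hB : Ideal.span B = toricIdeal k n := by
      apply le_antisymm
      · rw [Ideal.span_le]
        rintro f ⟨a, b, rfl, hab, -⟩
        exact (binom_mem k n a b).2 hab
      · apply toric_le
        intro a b hab
        by_cases hc : tlen a ≠ tlen b → a i + b i ≠ 0
        · exact Ideal.subset_span ⟨a, b, rfl, hab, hc⟩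
        push Not at hc
        obtain ⟨hne, h0⟩ := hc
        have hnpos : ∀ j, 0 < n j := fun j =>
          lt_of_lt_of_le hpos (hmono.monotone (Fin.mk_le_of_le_val (Nat.zero_le _)))
        have hzero : ∀ c : Fin d → ℕ, sval n c = 0 → tlen c = 0 := by
          intro c hc
          simp only [sval, Finset.sum_eq_zero_iff, Finset.mem_univ, true_imp_iff,
            mul_eq_zero] at hc
          simp only [tlen, Finset.sum_eq_zero_iff, Finset.mem_univ, true_imp_iff]
          exact fun j => (hc j).resolve_right (hnpos j).ne'
        have ht : sval n a ≠ 0 := fun h =>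
          hne ((hzero a h).trans (hzero b (hab ▸ h)).symm)
        have hA : sval n a ∉ Apery n (n i) := fun hA =>
          hne (H _ hA ht a b rfl hab.symm)
        have hA' : ∃ y ∈ gen n, sval n a = n i + y := by
          by_contra hcon
          exact hA ⟨⟨a, rfl⟩, hcon⟩
        obtain ⟨y, ⟨c, rfl⟩, hy⟩ := hA'
        have hc' : sval n (Pi.single i 1 + c) = sval n a := by
          rw [sval_add, sval_single, hy]
        rw [← sub_add_sub_cancel (monom k a) (monom k (Pi.single i 1 + c)) (monom k b)]
        apply Ideal.add_mem
        · exact Ideal.subset_span ⟨_, _, rfl, hc'.symm, fun _ => by simp⟩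
        · exact Ideal.subset_span ⟨_, _, rfl, hc'.trans hab, fun _ => by simp⟩
    obtain ⟨E, hEB, hE⟩ := exists_minGen B
    rw [hB] at hE
    refine ⟨E, hE, ?_, ?_⟩
    · intro f hf
      obtain ⟨a, b, h, -⟩ := hEB hf
      exact ⟨a, b, h⟩
    · intro a b hf hne
      obtain ⟨a', b', h, -, h'⟩ := hEB hf
      have hab : a ≠ b := fun h => hne (by rw [h])
      rcases monom_sub_inj k a b a' b' hab h with ⟨rfl, rfl⟩ | ⟨rfl, rfl⟩
      · exact h' hne
      · rw [add_comm]; exact h' hne.symm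
  · rintro ⟨E, ⟨hE, -⟩, hb, hs⟩
    exact homog_of_span k n i E hE hb hs
end

section
/- Let q be a positive integer. (a) For m = 2q+5, the numerical semigroup S generated by n_1 = m, n_2 = m+1, n_3 = (q+1)m+q+2, n_4 = (q+2)m−1 is homogeneous, i.e. every element of AP(S,m) has all its factorizations of the same length. (b) For m = 2q+4 and q > 1, the numerical semigroup S generated by n_1 = m, n_2 = m+1, n_3 = qm+2q+3, n_4 = (q+1)m+q+2 is not homogeneous; moreover n_4 + n_1 = (q+2)·n_2, so n_4 is a torsion element of S and T(S) ≠ ∅, i.e. the tangent cone of S is not Cohen–Macaulay. -/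
open scoped BigOperators

/-- The pseudo-symmetric family of multiplicity `m = 2q+5`. -/
def psA (q : ℕ) : Fin 4 → ℕ :=
  ![2 * q + 5, 2 * q + 6, (q + 1) * (2 * q + 5) + q + 2,
    (q + 2) * (2 * q + 5) - 1]

/-- The pseudo-symmetric family of multiplicity `m = 2q+4`. -/
def psB (q : ℕ) : Fin 4 → ℕ :=
  ![2 * q + 4, 2 * q + 5, q * (2 * q + 4) + 2 * q + 3,
    (q + 1) * (2 * q + 4) + q + 2]

lemma sval4 (n a : Fin 4 → ℕ) :
    sval n a = a 0 * n 0 + a 1 * n 1 + a 2 * n 2 + a 3 * n 3 := by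
  simp [sval, Fin.sum_univ_four]

lemma tlen4 (a : Fin 4 → ℕ) : tlen a = a 0 + a 1 + a 2 + a 3 := by
  simp [tlen, Fin.sum_univ_four]

lemma psA_sval (q : ℕ) (a : Fin 4 → ℕ) :
    sval (psA q) a = a 0 * (2 * q + 5) + a 1 * (2 * q + 6) +
      a 2 * ((q + 1) * (2 * q + 5) + q + 2) + a 3 * ((q + 1) * (2 * q + 5) + 2 * q + 4) := by
  have h : (q + 2) * (2 * q + 5) - 1 = (q + 1) * (2 * q + 5) + 2 * q + 4 := by
    have : (q + 2) * (2 * q + 5) = (q + 1) * (2 * q + 5) + 2 * q + 4 + 1 := by ring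
    omega
  rw [sval4, ← h]
  simp [psA]

lemma psB_sval (q : ℕ) (a : Fin 4 → ℕ) :
    sval (psB q) a = a 0 * (2 * q + 4) + a 1 * (2 * q + 5) +
      a 2 * (q * (2 * q + 4) + 2 * q + 3) + a 3 * ((q + 1) * (2 * q + 4) + q + 2) := by
  rw [sval4]
  simp [psB]

/-- Factorizations of Apery elements of the first family are very restricted. -/
lemma psA_fact (q t : ℕ) (ht : t ∈ Apery (psA q) (psA q 0)) (a : Fin 4 → ℕ)
    (ha : sval (psA q) a = t) :
    a 0 = 0 ∧ a 1 ≤ q + 1 ∧ a 2 ≤ 1 ∧ a 3 ≤ 1 ∧ (a 3 = 1 → a 1 = 0 ∧ a 2 = 0) := by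
  have key : ∀ x0 x1 x2 x3 : ℕ, t ≠ (2 * q + 5) + (x0 * (2 * q + 5) + x1 * (2 * q + 6) +
      x2 * ((q + 1) * (2 * q + 5) + q + 2) + x3 * ((q + 1) * (2 * q + 5) + 2 * q + 4)) := by
    intro x0 x1 x2 x3 h
    apply ht.2
    refine ⟨_, ⟨![x0, x1, x2, x3], rfl⟩, ?_⟩
    rw [psA_sval, h]
    simp [psA]
  rw [psA_sval] at ha
  generalize a 0 = a0 at *
  generalize a 1 = a1 at *
  generalize a 2 = a2 at *
  generalize a 3 = a3 at *
  have h0 : a0 = 0 := by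
    by_contra h
    obtain ⟨c, rfl⟩ : ∃ c, a0 = c + 1 := ⟨a0 - 1, by omega⟩
    exact key c a1 a2 a3 (by rw [← ha]; ring)
  have h1 : a1 ≤ q + 1 := by
    by_contra h
    obtain ⟨c, rfl⟩ : ∃ c, a1 = c + (q + 2) := ⟨a1 - (q + 2), by omega⟩
    exact key a0 c (a2 + 1) a3 (by rw [← ha]; ring)
  have h2 : a2 ≤ 1 := by
    by_contra h
    obtain ⟨c, rfl⟩ : ∃ c, a2 = c + 2 := ⟨a2 - 2, by omega⟩
    exact key (a0 + q) a1 c (a3 + 1) (by rw [← ha]; ring)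
  have h3 : a3 ≤ 1 := by
    by_contra h
    obtain ⟨c, rfl⟩ : ∃ c, a3 = c + 2 := ⟨a3 - 2, by omega⟩
    exact key a0 (a1 + (q + 1)) (a2 + 1) c (by rw [← ha]; ring)
  refine ⟨h0, h1, h2, h3, ?_⟩
  rintro rfl
  constructor
  · by_contra h
    obtain ⟨c, rfl⟩ : ∃ c, a1 = c + 1 := ⟨a1 - 1, by omega⟩
    exact key (a0 + (q + 2)) c a2 0 (by rw [← ha]; ring)
  · by_contra h
    obtain ⟨c, rfl⟩ : ∃ c, a2 = c + 1 := ⟨a2 - 1, by omega⟩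
    exact key (a0 + (q + 1)) (a1 + (q + 1)) c 0 (by rw [← ha]; ring)

lemma psA_homog (q : ℕ) : HomogSet (psA q) (Apery (psA q) (psA q 0)) := by
  intro t ht _ a b ha hb
  obtain ⟨a0, a1, a2, a3, a4⟩ := psA_fact q t ht a ha
  obtain ⟨b0, b1, b2, b3, b4⟩ := psA_fact q t ht b hb
  rw [tlen4, tlen4]
  have e := ha.trans hb.symm
  rw [psA_sval, psA_sval] at e
  clear ha hb ht
  generalize a 0 = x0 at *
  generalize a 1 = x1 at *
  generalize a 2 = x2 at *
  generalize a 3 = x3 at *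
  generalize b 0 = y0 at *
  generalize b 1 = y1 at *
  generalize b 2 = y2 at *
  generalize b 3 = y3 at *
  subst a0 b0
  have hx : x1 * (2 * q + 6) ≤ (q + 1) * (2 * q + 5) + (q + 1) :=
    (Nat.mul_le_mul_right _ a1).trans (by ring_nf; rfl)
  have hy : y1 * (2 * q + 6) ≤ (q + 1) * (2 * q + 5) + (q + 1) :=
    (Nat.mul_le_mul_right _ b1).trans (by ring_nf; rfl)
  have hx0 : x1 = 0 ∨ 2 * q + 6 ≤ x1 * (2 * q + 6) := by
    rcases Nat.eq_zero_or_pos x1 with h | h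
    · exact Or.inl h
    · exact Or.inr (Nat.le_mul_of_pos_left _ h)
  have hy0 : y1 = 0 ∨ 2 * q + 6 ≤ y1 * (2 * q + 6) := by
    rcases Nat.eq_zero_or_pos y1 with h | h
    · exact Or.inl h
    · exact Or.inr (Nat.le_mul_of_pos_left _ h)
  have hxy : x1 * (2 * q + 6) = y1 * (2 * q + 6) → x1 = y1 :=
    fun h => Nat.eq_of_mul_eq_mul_right (by omega) h
  generalize hX : x1 * (2 * q + 6) = X at *
  generalize hY : y1 * (2 * q + 6) = Y at *
  generalize (q + 1) * (2 * q + 5) = P at *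
  have hx0' : x1 = 0 → X = 0 := by rintro rfl; omega
  have hy0' : y1 = 0 → Y = 0 := by rintro rfl; omega
  clear hX hY
  interval_cases x2 <;> interval_cases x3 <;> interval_cases y2 <;> interval_cases y3 <;> omega

/-- The value in the second family, split off by size. -/
lemma psB_small (q : ℕ) (hq : 1 < q) (a : Fin 4 → ℕ)
    (ha : sval (psB q) a = 2 * q * (2 * q + 4) + 2 * q + 2) : False := by
  rw [psB_sval] at ha
  generalize a 0 = a0 at *
  generalize a 1 = a1 at *
  generalize a 2 = a2 at *
  generalize a 3 = a3 at *
  have h23 : a2 + a3 ≤ 1 := by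
    by_contra h
    have k1 : 2 * (q * (2 * q + 4) + 2 * q + 3) ≤ (a2 + a3) * (q * (2 * q + 4) + 2 * q + 3) :=
      Nat.mul_le_mul_right _ (by omega)
    have k2 : a3 * (q * (2 * q + 4) + 2 * q + 3) ≤ a3 * ((q + 1) * (2 * q + 4) + q + 2) :=
      Nat.mul_le_mul_left _ (by nlinarith)
    have k3 : 0 ≤ a0 * (2 * q + 4) := Nat.zero_le _
    have k4 : 0 ≤ a1 * (2 * q + 5) := Nat.zero_le _
    rw [add_mul] at k1
    nlinarith
  have hs : (a0 + a1) * (2 * q + 4) + a1 +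
      a2 * (q * (2 * q + 4) + 2 * q + 3) + a3 * ((q + 1) * (2 * q + 4) + q + 2) =
      2 * q * (2 * q + 4) + 2 * q + 2 := by rw [← ha]; ring
  have hle : a1 ≤ a0 + a1 := by omega
  generalize a0 + a1 = s at *
  clear ha
  have : (a2 = 0 ∧ a3 = 0) ∨ (a2 = 1 ∧ a3 = 0) ∨ (a2 = 0 ∧ a3 = 1) := by omega
  rcases this with ⟨rfl, rfl⟩ | ⟨rfl, rfl⟩ | ⟨rfl, rfl⟩
  · have : s ≤ 2 * q := by by_contra h; nlinarith
    nlinarith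
  · have : s + 1 ≤ q := by by_contra h; nlinarith
    nlinarith
  · have : s + 1 ≤ q := by by_contra h; nlinarith
    nlinarith

lemma psB_n4 (q : ℕ) (hq : 1 < q) (a : Fin 4 → ℕ)
    (ha : sval (psB q) a = (q + 1) * (2 * q + 4) + q + 2) : tlen a = 1 := by
  rw [psB_sval] at ha
  rw [tlen4]
  generalize a 0 = a0 at *
  generalize a 1 = a1 at *
  generalize a 2 = a2 at *
  generalize a 3 = a3 at *
  have h23 : a2 + a3 ≤ 1 := by
    by_contra h
    have k1 : 2 * (q * (2 * q + 4) + 2 * q + 3) ≤ (a2 + a3) * (q * (2 * q + 4) + 2 * q + 3) :=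
      Nat.mul_le_mul_right _ (by omega)
    have k2 : a3 * (q * (2 * q + 4) + 2 * q + 3) ≤ a3 * ((q + 1) * (2 * q + 4) + q + 2) :=
      Nat.mul_le_mul_left _ (by nlinarith)
    have k3 : 0 ≤ a0 * (2 * q + 4) := Nat.zero_le _
    have k4 : 0 ≤ a1 * (2 * q + 5) := Nat.zero_le _
    rw [add_mul] at k1
    nlinarith
  have : (a2 = 0 ∧ a3 = 0) ∨ (a2 = 1 ∧ a3 = 0) ∨ (a2 = 0 ∧ a3 = 1) := by omega
  rcases this with ⟨rfl, rfl⟩ | ⟨rfl, rfl⟩ | ⟨rfl, rfl⟩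
  · exfalso
    have : a0 + a1 ≤ q + 1 := by by_contra h; nlinarith
    nlinarith
  · exfalso
    have : a0 + a1 = 0 := by by_contra h; nlinarith [Nat.pos_of_ne_zero h]
    obtain ⟨rfl, rfl⟩ : a0 = 0 ∧ a1 = 0 := by omega
    nlinarith
  · have : a0 + a1 = 0 := by by_contra h; nlinarith [Nat.pos_of_ne_zero h]
    omega

lemma psB_not_homog (q : ℕ) (hq : 1 < q) :
    ¬ HomogSet (psB q) (Apery (psB q) (psB q 0)) := by
  intro H
  have h1 : sval (psB q) ![0, 0, 2, 0] = (2 * q + 4) + (2 * q * (2 * q + 4) + 2 * q + 2) := by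
    rw [psB_sval]; simp; ring
  have h2 : sval (psB q) ![0, q, 0, 1] = (2 * q + 4) + (2 * q * (2 * q + 4) + 2 * q + 2) := by
    rw [psB_sval]; simp; ring
  have := H _ ⟨⟨_, h1.symm⟩, ?_⟩ (by omega) _ _ h1 h2
  · rw [tlen4, tlen4] at this
    simp at this
    omega
  · rintro ⟨y, ⟨a, rfl⟩, hy⟩
    apply psB_small q hq a
    have : psB q 0 = 2 * q + 4 := rfl
    omega

lemma psB_rel (q : ℕ) : psB q 3 + psB q 0 = (q + 2) * psB q 1 := by
  simp [psB]; ring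

lemma psB_torsion (q : ℕ) (hq : 1 < q) : psB q 3 ∈ Torsion (psB q) 0 := by
  have e3 : psB q 3 = (q + 1) * (2 * q + 4) + q + 2 := rfl
  refine ⟨⟨![0, 0, 0, 1], by rw [sval4]; simp⟩, 1, one_pos, ?_⟩
  have hle : ordS (psB q) (psB q 3) ≤ 1 := by
    apply csSup_le'
    rintro l ⟨a, ha, rfl⟩
    exact (psB_n4 q hq a (ha.trans e3)).le
  have hge : q + 2 ≤ ordS (psB q) (psB q 3 + 1 * psB q 0) := by
    apply le_csSup
    · refine ⟨psB q 3 + 1 * psB q 0, ?_⟩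
      rintro l ⟨a, ha, rfl⟩
      rw [← ha, psB_sval, tlen4]
      have := Nat.le_mul_of_pos_right (a 0) (show 0 < 2 * q + 4 by omega)
      have := Nat.le_mul_of_pos_right (a 1) (show 0 < 2 * q + 5 by omega)
      have := Nat.le_mul_of_pos_right (a 2) (show 0 < q * (2 * q + 4) + 2 * q + 3 by omega)
      have := Nat.le_mul_of_pos_right (a 3) (show 0 < (q + 1) * (2 * q + 4) + q + 2 by omega)
      omega
    · refine ⟨![0, q + 2, 0, 0], ?_, ?_⟩
      · rw [one_mul, psB_rel, sval4]; simp
      · rw [tlen4]; simp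
  omega

/-- the pseudo-symmetric family with `m = 2q+5` is homogeneous;
the one with `m = 2q+4` and `q > 1` is not homogeneous, `n₄ + n₁ = (q+2)·n₂`,
`n₄` is a torsion element and `T(S) ≠ ∅` (the tangent cone is not
Cohen–Macaulay). -/
theorem statement12 (q : ℕ) (hq : 0 < q) :
    HomogSet (psA q) (Apery (psA q) (psA q 0)) ∧
    (1 < q →
      ¬ HomogSet (psB q) (Apery (psB q) (psB q 0)) ∧
      psB q 3 + psB q 0 = (q + 2) * psB q 1 ∧
      psB q 3 ∈ Torsion (psB q) 0 ∧
      Torsion (psB q) 0 ≠ ∅) := by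
  exact ⟨psA_homog q, fun h => ⟨psB_not_homog q h, psB_rel q, psB_torsion q h,
    Set.nonempty_iff_ne_empty.mp ⟨_, psB_torsion q h⟩⟩⟩
end
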